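/- arXiv:1910.09264 — 5 statements merged into one kernel-verified Lean document; each statement's English description precedes it below -/
import Mathlib

section
/- The projection decide is monotone from ⊑* to the product order on 𝒪 × 𝒞: for triples with finite third components, if (v, s, S) ⊑* (v', s', S') then decide(v, s, S) ≤ decide(v', s', S'), i.e., s ≤ s' in 𝒪 and sup({v.C} ∪ S) ≤ sup({v'.C} ∪ S') in 𝒞. -/
/-- The relation `⊑*` on triples with a finite third component:
`(v,s,S) ⊑* (v',s',S')` iff `v ≤ v'`, `s ≤ s'`, and `{u ∈ S | ¬ u ≤ v'.C} ⊆ S'`. -/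
def SqLe {𝒪 𝒞 : Type*} [SemilatticeSup 𝒪] [SemilatticeSup 𝒞]
    (t t' : (𝒪 × 𝒞) × 𝒪 × Finset 𝒞) : Prop :=
  t.1 ≤ t'.1 ∧ t.2.1 ≤ t'.2.1 ∧
    {u ∈ (t.2.2 : Set 𝒞) | ¬ u ≤ t'.1.2} ⊆ (t'.2.2 : Set 𝒞)

/-- The projection `decide (v, s, S) = (s, sup ({v.C} ∪ S))`. -/
def decide {𝒪 𝒞 : Type*} [SemilatticeSup 𝒪] [SemilatticeSup 𝒞] [DecidableEq 𝒞]
    (t : (𝒪 × 𝒞) × 𝒪 × Finset 𝒞) : 𝒪 × 𝒞 :=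
  (t.2.1, (insert t.1.2 t.2.2).sup' (Finset.insert_nonempty _ _) id)

/-- `decide` is monotone from `⊑*` to the product order on `𝒪 × 𝒞`. -/
theorem decide_monotone {𝒪 𝒞 : Type*} [SemilatticeSup 𝒪] [SemilatticeSup 𝒞]
    [DecidableEq 𝒞] (t t' : (𝒪 × 𝒞) × 𝒪 × Finset 𝒞) (h : SqLe t t') :
    decide t ≤ decide t' := by
  obtain ⟨hv, hs, hS⟩ := h
  refine ⟨hs, Finset.sup'_le (Finset.insert_nonempty _ _) _ fun u hu => ?_⟩
  have hC : t'.1.2 ≤ (insert t'.1.2 t'.2.2).sup' (Finset.insert_nonempty _ _) id :=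
    Finset.le_sup' id (Finset.mem_insert_self _ _)
  rcases Finset.mem_insert.1 hu with rfl | hu
  · exact hv.2.trans hC
  -- An element of `S` that is missing from `S'` is already below `v'.C`.
  · by_cases huC : u ≤ t'.1.2
    · exact huC.trans hC
    · exact Finset.le_sup' id (Finset.mem_insert_of_mem (hS ⟨hu, huC⟩))
end

section
/- Let Z be a join-semilattice, A a type, and τ : Z → A → Z a transition function satisfying (i) z ≤ τ z a for all z ∈ Z, a ∈ A (inflationary), and (ii) τ (τ z a) a' = (τ z a) ⊔ (τ z a') for all z ∈ Z and a, a' ∈ A (commuting composition). Then the state reached after a sequence of transitions is order-independent: for every z ∈ Z and all lists l, l' of elements of A such that l' is a permutation of l, List.foldl τ z l = List.foldl τ z l'. -/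
/-- For an L-ADT transition function (inflationary and with commuting composition),
the state reached after a sequence of transitions is order-independent: applying
any permutation of a list of inputs yields the same state. -/
theorem foldl_eq_of_perm {Z A : Type*} [SemilatticeSup Z] (τ : Z → A → Z)
    (hinfl : ∀ (z : Z) (a : A), z ≤ τ z a)
    (hcomm : ∀ (z : Z) (a a' : A), τ (τ z a) a' = τ z a ⊔ τ z a')
    (z : Z) (l l' : List A) (hp : l'.Perm l) :
    List.foldl τ z l = List.foldl τ z l' := by
  -- Two successive inputs commute, since `τ z a ⊔ τ z a'` is symmetric in `a` and `a'`.
  have : RightCommutative τ := ⟨fun z a a' => by rw [hcomm, hcomm, sup_comm]⟩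
  exact hp.symm.foldl_eq z
end

section
/- Let Z be a join-semilattice, A a type, and τ : Z → A → Z a transition function satisfying (i) z ≤ τ z a for all z ∈ Z, a ∈ A, and (ii) τ (τ z a) a' = (τ z a) ⊔ (τ z a') for all z ∈ Z and a, a' ∈ A. Then for every z ∈ Z and every nonempty list l = [a₁, …, aₙ] of elements of A, the state reached by applying l to z equals the join of the one-step transitions: List.foldl τ z l = (τ z a₁) ⊔ (τ z a₂) ⊔ ⋯ ⊔ (τ z aₙ). -/
/-!
The key point is that every state `w` reachable from `z` satisfies `τ w b = w ⊔ τ z b`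
(`apply_foldl_eq_sup`), so each further input `b` just joins the one-step transition `τ z b`
onto the current state. Both facts follow by induction on the last input of the list.
-/

/-- From a state reachable from `z`, the input `b` acts as the join with `τ z b`. If the state is
`τ w c` with `w` reachable, then `τ (τ w c) b = τ w c ⊔ τ w b = τ w c ⊔ (w ⊔ τ z b)`, and `w` is
absorbed because `w ≤ τ w c`. -/
theorem apply_foldl_eq_sup {Z A : Type*} [SemilatticeSup Z] (τ : Z → A → Z)
    (hinfl : ∀ (z : Z) (a : A), z ≤ τ z a)
    (hcomm : ∀ (z : Z) (a a' : A), τ (τ z a) a' = τ z a ⊔ τ z a')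
    (z : Z) (l : List A) (b : A) :
    τ (List.foldl τ z l) b = List.foldl τ z l ⊔ τ z b := by
  induction l using List.reverseRecOn generalizing b with
  | nil => exact (sup_eq_right.mpr (hinfl z b)).symm
  | append_singleton l c ih =>
    rw [List.foldl_append, List.foldl_cons, List.foldl_nil, hcomm, ih b, ← sup_assoc,
      sup_eq_left.mpr (hinfl _ c)]

/-- For an L-ADT transition function (inflationary and with commuting composition),
the state reached by applying a nonempty list `a :: l` of inputs to `z` equals the
join of the one-step transitions: `τ z a ⊔ τ z a₂ ⊔ ⋯ ⊔ τ z aₙ`. -/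
theorem foldl_eq_join_of_one_step {Z A : Type*} [SemilatticeSup Z] (τ : Z → A → Z)
    (hinfl : ∀ (z : Z) (a : A), z ≤ τ z a)
    (hcomm : ∀ (z : Z) (a a' : A), τ (τ z a) a' = τ z a ⊔ τ z a')
    (z : Z) (a : A) (l : List A) :
    List.foldl τ z (a :: l) = (l.map (τ z)).foldl (· ⊔ ·) (τ z a) := by
  induction l using List.reverseRecOn with
  | nil => rfl
  | append_singleton l b ih =>
    rw [← List.cons_append, List.foldl_append, List.foldl_cons, List.foldl_nil,
      apply_foldl_eq_sup τ hinfl hcomm, ih, List.map_append, List.foldl_append]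
    rfl
end

section
/- The composition of two L-ADT transition functions is an L-ADT transition function: let Z₁, Z₂ be join-semilattices, A₁, A₂ types, and τ₁ : Z₁ → A₁ → Z₁, τ₂ : Z₂ → A₂ → Z₂ transition functions each satisfying the inflationary law (z ≤ τᵢ z a) and the commuting-composition law (τᵢ (τᵢ z a) a' = τᵢ z a ⊔ τᵢ z a'). Define τ : (Z₁ × Z₂) → (A₁ ⊕ A₂) → Z₁ × Z₂ by τ (z₁, z₂) (inl a) = (τ₁ z₁ a, z₂) and τ (z₁, z₂) (inr a) = (z₁, τ₂ z₂ a). Then τ satisfies both laws on the product join-semilattice Z₁ × Z₂ (componentwise order and join): (z₁,z₂) ≤ τ (z₁,z₂) a for every input a ∈ A₁ ⊕ A₂, and τ (τ (z₁,z₂) a) a' = τ (z₁,z₂) a ⊔ τ (z₁,z₂) a' for all inputs a, a'. -/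
/-- The composed transition function of two L-ADTs on the product state space
`Z₁ × Z₂` with input alphabet the disjoint union `A₁ ⊕ A₂`. -/
def prodTau {Z₁ Z₂ A₁ A₂ : Type*} (τ₁ : Z₁ → A₁ → Z₁) (τ₂ : Z₂ → A₂ → Z₂)
    (z : Z₁ × Z₂) : A₁ ⊕ A₂ → Z₁ × Z₂
  | Sum.inl a => (τ₁ z.1 a, z.2)
  | Sum.inr a => (z.1, τ₂ z.2 a)

/-- The composition of two L-ADT transition functions is an L-ADT transition
function on the product join-semilattice: it is inflationary and its compositions
commute via the product join. -/
theorem prodTau_is_LADT {Z₁ Z₂ A₁ A₂ : Type*} [SemilatticeSup Z₁] [SemilatticeSup Z₂]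
    (τ₁ : Z₁ → A₁ → Z₁) (τ₂ : Z₂ → A₂ → Z₂)
    (hinfl₁ : ∀ (z : Z₁) (a : A₁), z ≤ τ₁ z a)
    (hcomm₁ : ∀ (z : Z₁) (a a' : A₁), τ₁ (τ₁ z a) a' = τ₁ z a ⊔ τ₁ z a')
    (hinfl₂ : ∀ (z : Z₂) (a : A₂), z ≤ τ₂ z a)
    (hcomm₂ : ∀ (z : Z₂) (a a' : A₂), τ₂ (τ₂ z a) a' = τ₂ z a ⊔ τ₂ z a') :
    (∀ (z : Z₁ × Z₂) (a : A₁ ⊕ A₂), z ≤ prodTau τ₁ τ₂ z a) ∧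
    (∀ (z : Z₁ × Z₂) (a a' : A₁ ⊕ A₂),
      prodTau τ₁ τ₂ (prodTau τ₁ τ₂ z a) a' = prodTau τ₁ τ₂ z a ⊔ prodTau τ₁ τ₂ z a') := by
  constructor
  · rintro ⟨z₁, z₂⟩ (a | a)
    · exact ⟨hinfl₁ z₁ a, le_rfl⟩
    · exact ⟨le_rfl, hinfl₂ z₂ a⟩
  -- Two inputs on the same side: the commuting law there, idempotence of `⊔` on the other.
  -- Inputs on different sides: each component is joined with an unchanged state, which the
  -- inflationary law absorbs.
  · rintro ⟨z₁, z₂⟩ (a | a) (a' | a')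
    · simp [prodTau, hcomm₁]
    · simp [prodTau, sup_eq_left.2 (hinfl₁ z₁ a), sup_eq_right.2 (hinfl₂ z₂ a')]
    · simp [prodTau, sup_eq_right.2 (hinfl₁ z₁ a'), sup_eq_left.2 (hinfl₂ z₂ a)]
    · simp [prodTau, hcomm₂]
end

section
/- Let (α, ≤) be a partial order, S a finite subset of α, and z₀ ∈ S an element with z₀ ≤ s for all s ∈ S. Let E be a binary relation on S such that E a b implies a < b (edges go from strictly smaller to strictly larger elements), and let v : S → S be a function such that for every s ∈ S with s ≠ z₀, E (v s) s. Assume the fork property: for all s̄, s, s' ∈ S, if E s̄ s, E s̄ s', v s' ≤ s and v s ≤ s', then s = s' or E s s' or E s' s. Then any two elements of S are comparable: for all s, s' ∈ S, s ≤ s' or s' ≤ s. -/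
/-!
The key fact is that `E t s` holds whenever `v s ≤ t < s`: a state has an incoming edge not only
from its commit estimate but from every state between that estimate and itself. This edge filling
and the comparability of `s` and `t` are proved together, by induction on the sum of the ranks of
`s` and `t`, where the rank of a state is the number of states strictly below it.

* Edge filling, `v s < t < s`: the states `v s` and `v t` are comparable by induction. The larger
  of the two has an edge both to `s` and to `t` (one by definition of `v`, the other by edge
  filling for a smaller pair), so the fork property applies at it and, as `t < s`, yields `E t s`.
* Comparability: if `s` and `t` were incomparable, then by induction `v s < t`, `v t < s`, and
  `v s`, `v t` are comparable. Again the larger of the two has an edge to both `s` and `t`, and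
  the fork property makes `s` and `t` comparable.
-/

open Classical in
/-- The number of elements of `S` strictly below `s`. -/
noncomputable def stateRank {α : Type*} [PartialOrder α] (S : Finset α) (s : α) : ℕ :=
  (S.filter (· < s)).card

lemma stateRank_lt {α : Type*} [PartialOrder α] {S : Finset α} {a b : α} (ha : a ∈ S)
    (hab : a < b) : stateRank S a < stateRank S b := by
  classical
  unfold stateRank
  apply Finset.card_lt_card
  rw [Finset.ssubset_iff_of_subset]
  · exact ⟨a, by simp [ha, hab], by simp⟩
  · intro x hx
    simp only [Finset.mem_filter] at hx ⊢
    exact ⟨hx.1, hx.2.trans hab⟩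

/-- Abstract order-theoretic content of the consistency argument: if the
committed states `S` (with initial state `z₀` below all of `S`) carry an edge
relation `E` going from strictly smaller to strictly larger states, every
non-initial state `s` has an incoming edge from its commit estimate `v s`,
and the fork property holds, then any two states of `S` are comparable. -/
theorem comparable_of_fork {α : Type*} [PartialOrder α]
    (S : Finset α) (z₀ : α) (hz₀ : z₀ ∈ S) (hbot : ∀ s ∈ S, z₀ ≤ s)
    (E : α → α → Prop)
    (hE : ∀ a ∈ S, ∀ b ∈ S, E a b → a < b)
    (v : α → α) (hvmem : ∀ s ∈ S, v s ∈ S)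
    (hv : ∀ s ∈ S, s ≠ z₀ → E (v s) s)
    (fork : ∀ sb ∈ S, ∀ s ∈ S, ∀ s' ∈ S,
      E sb s → E sb s' → v s' ≤ s → v s ≤ s' → s = s' ∨ E s s' ∨ E s' s) :
    ∀ s ∈ S, ∀ s' ∈ S, s ≤ s' ∨ s' ≤ s := by
  have hvlt : ∀ s ∈ S, s ≠ z₀ → v s < s := fun s hs h => hE _ (hvmem s hs) s hs (hv s hs h)
  have key : ∀ n : ℕ, ∀ s ∈ S, ∀ t ∈ S, stateRank S s + stateRank S t = n →
      (s ≤ t ∨ t ≤ s) ∧ (v s ≤ t → t < s → E t s) := by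
    intro n
    induction n using Nat.strong_induction_on with
    | _ n ih =>
    intro s hs t ht hn
    by_cases hs0 : s = z₀
    · subst hs0
      exact ⟨Or.inl (hbot t ht), fun _ h => absurd (hbot t ht) h.not_ge⟩
    by_cases ht0 : t = z₀
    · subst ht0
      refine ⟨Or.inr (hbot s hs), fun h _ => ?_⟩
      have hvs : v s = t := le_antisymm h (hbot _ (hvmem s hs))
      exact hvs ▸ hv s hs hs0
    have hvs := hvmem s hs
    have hvt := hvmem t ht
    have hls := hvlt s hs hs0
    have hlt := hvlt t ht ht0
    have hEs := hv s hs hs0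
    have hEt := hv t ht ht0
    have rs := stateRank_lt hvs hls
    have rt := stateRank_lt hvt hlt
    have hvv := (ih _ (by omega) (v s) hvs (v t) hvt rfl).1
    -- The larger of `v s` and `v t` is the common source of edges to which `fork` applies.
    have hfork : v s ≤ t → v t ≤ s → s = t ∨ E s t ∨ E t s := by
      intro h1 h2
      rcases hvv with h | h
      · rcases h2.eq_or_lt with h2' | h2'
        · exact Or.inr (Or.inl (h2' ▸ hEt))
        · exact fork _ hvt s hs t ht ((ih _ (by omega) s hs (v t) hvt rfl).2 h h2') hEt h2 h1
      · rcases h1.eq_or_lt with h1' | h1'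
        · exact Or.inr (Or.inr (h1' ▸ hEs))
        · exact fork _ hvs s hs t ht hEs ((ih _ (by omega) t ht (v s) hvs rfl).2 h h1') h2 h1
    constructor
    · rcases (ih _ (by omega) (v s) hvs t ht rfl).1 with h1 | h1
      · rcases (ih _ (by omega) s hs (v t) hvt rfl).1 with h2 | h2
        · exact Or.inl (h2.trans hlt.le)
        · rcases hfork h1 h2 with h | h | h
          · exact Or.inl h.le
          · exact Or.inl (hE s hs t ht h).le
          · exact Or.inr (hE t ht s hs h).le
      · exact Or.inr (h1.trans hls.le)
    · intro h1 hts
      rcases hfork h1 (hlt.le.trans hts.le) with h | h | h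
      · exact absurd h hts.ne'
      · exact absurd (hE s hs t ht h) hts.not_gt
      · exact h
  intro s hs s' hs'
  exact (key _ s hs s' hs' rfl).1
end
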